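/- Uniform quantitative enhancement via bounded cutsets (finite-volume core of Proposition 4.1, cutset side). Let (V, E, ends, α) be a finite graph with boundary condition, p ∈ (0,1), q > 0, and let D ≥ 1 be an integer. Let Ê ⊆ E be such that every e ∈ Ê admits a cutset χ_e for e included in E∖Ê with |χ_e| ≤ D−1. Set δ := |p'−p| · (1−max(p,p'))^{D−1}. Then: if p < p', one has P_{(p+δ·1_{e∈Ê})_{e∈E}} ≼ φ^α_{G,p,q}; and if p > p', one has φ^α_{G,p,q} ≼ P_{(p−δ·1_{e∈Ê})_{e∈E}}. -/

import Mathlib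

open scoped Classical

noncomputable section

namespace FKPaper

variable {V E : Type*}

/-- One-step adjacency between wired vertices through an edge in `F`. -/
def Step (ends : E → Sym2 V) (α : Setoid V) (F : Set E) (x y : Quotient α) : Prop :=
  ∃ e ∈ F, Sym2.map (Quotient.mk α) (ends e) = s(x, y)

/-- Setoid of connected components of the wired multigraph with edge set `F`. -/
def connSetoid (ends : E → Sym2 V) (α : Setoid V) (F : Set E) : Setoid (Quotient α) :=
  Relation.EqvGen.setoid (Step ends α F)

/-- Connectivity in the wired multigraph with edge set `F`. -/
def Conn (ends : E → Sym2 V) (α : Setoid V) (F : Set E) (x y : Quotient α) : Prop :=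
  (connSetoid ends α F).r x y

/-- The two endpoints of `e` are joined in the wired multigraph with edge set `F`. -/
def EndsConn (ends : E → Sym2 V) (α : Setoid V) (F : Set E) (e : E) : Prop :=
  ∀ x y : V, ends e = s(x, y) → Conn ends α F (Quotient.mk α x) (Quotient.mk α y)

/-- Number of connected components `k(ω, α)`. -/
def numComponents (ends : E → Sym2 V) (α : Setoid V) (ω : E → Bool) : ℕ :=
  Nat.card (Quotient (connSetoid ends α {e | ω e = true}))

/-- `p' = p / (p + q (1 - p))`. -/
def pPrime (p q : ℝ) : ℝ := p / (p + q * (1 - p))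

/-- Total mass of a set under a weight function. -/
def massOf {ι : Type*} [Fintype ι] (w : ι → ℝ) (A : Set ι) : ℝ :=
  ∑ x ∈ Finset.univ.filter (· ∈ A), w x

/-- Normalized probability of a set under a weight function. -/
def probOf {ι : Type*} [Fintype ι] (w : ι → ℝ) (A : Set ι) : ℝ :=
  massOf w A / massOf w Set.univ

/-- FK weight of a configuration. -/
def fkWeight [Fintype E] (ends : E → Sym2 V) (α : Setoid V) (p q : ℝ) (ω : E → Bool) : ℝ :=
  p ^ (Finset.univ.filter fun e => ω e = true).card *
    (1 - p) ^ (Finset.univ.filter fun e => ω e = false).card *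
    q ^ numComponents ends α ω

/-- The FK (random cluster) probability measure `φ^α_{G,p,q}`. -/
def fkProb [Fintype E] (ends : E → Sym2 V) (α : Setoid V) (p q : ℝ)
    (A : Set (E → Bool)) : ℝ :=
  probOf (fkWeight ends α p q) A

/-- Inhomogeneous Bernoulli weight. -/
def berWeight [Fintype E] (pe : E → ℝ) (ω : E → Bool) : ℝ :=
  ∏ e, if ω e = true then pe e else 1 - pe e

/-- Inhomogeneous Bernoulli product measure `P_{(p_e)}`. -/
def berProb [Fintype E] (pe : E → ℝ) (A : Set (E → Bool)) : ℝ :=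
  probOf (berWeight pe) A

/-- Increasing sets of configurations. -/
def Increasing (A : Set (E → Bool)) : Prop :=
  ∀ ⦃ω ω' : E → Bool⦄, ω ∈ A → (∀ e, ω e ≤ ω' e) → ω' ∈ A

/-- Stochastic domination `μ ≼ ν`. -/
def StochDom [Fintype E] (μ ν : Set (E → Bool) → ℝ) : Prop :=
  ∀ A : Set (E → Bool), Increasing A → μ A ≤ ν A

/-- `Q_F(e)`: cutsets for `e` included in `F`. -/
def Cutsets (ends : E → Sym2 V) (α : Setoid V) (F : Set E) (e : E) : Set (Set E) :=
  {χ | χ ⊆ F ∧ ¬ EndsConn ends α {e' | e' ∉ χ ∧ e' ≠ e} e}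

/-!
Put `r e = p + (p' - p) c e`, where `c e = (1 - max p p') ^ (D - 1)` on `Ehat` and `c e = 0`
elsewhere; the two product measures of the theorem are both `P_r`, one for each sign of `p' - p`.
Reveal the edges one at a time, those of `Ehat` first. Given all other edges, `e` is open with
probability `p'` if these do not join its endpoints and with probability `p` otherwise, so the
conditional probability that `e` is open given the revealed edges is `p + (p' - p) κ`, with `κ` the
conditional probability that the endpoints of `e` are not joined off `e`. While `Ehat` is being
revealed, the cutset of `e` is unrevealed and each of its edges is closed with conditional
probability at least `1 - max p p'`, whence `κ ≥ c e`. So the conditional probabilities lie on the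
`p'`-side of `r e`, and domination follows by resampling the edges in reverse order.
-/

section Configurations

/-- The event that the edge `e` is open. -/
def openEvent (e : E) : Set (E → Bool) := {ω | ω e = true}

/-- The event that all edges of `χ` are closed. -/
def closedOn (χ : Set E) : Set (E → Bool) := {ω | ∀ e ∈ χ, ω e = false}

theorem sum_eq_sum_filter_closed_add_update [Fintype E] {M : Type*} [AddCommMonoid M] (e : E)
    (F : (E → Bool) → M) :
    ∑ ω, F ω = ∑ ω with ω e = false, (F ω + F (Function.update ω e true)) := by
  have hopen : ∑ ω with ¬ ω e = false, F ω
      = ∑ ω with ω e = false, F (Function.update ω e true) := by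
    refine Finset.sum_nbij' (Function.update · e false) (Function.update · e true)
      (by simp) (by simp) (fun ω hω => ?_) (fun ω hω => ?_) (fun ω hω => ?_)
    all_goals rw [Finset.mem_filter_univ] at hω
    · rw [Bool.not_eq_false] at hω
      rw [Function.update_idem, ← hω, Function.update_eq_self]
    · rw [Function.update_idem, ← hω, Function.update_eq_self]
    · rw [Bool.not_eq_false] at hω
      rw [Function.update_idem, ← hω, Function.update_eq_self]
  rw [Finset.sum_add_distrib, ← hopen, Finset.sum_filter_add_sum_filter_not]

/-- `hw` says that `a ω` is the conditional probability of `e` being open given `ω` off `e`. -/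
theorem dotProduct_indicator_openEvent [Fintype E] {w a g : (E → Bool) → ℝ} {e : E}
    (ha : DependsOn a {e}ᶜ) (hg : DependsOn g {e}ᶜ)
    (hw : ∀ ω, ω e = false →
      w (Function.update ω e true) = a ω * (w ω + w (Function.update ω e true))) :
    w ⬝ᵥ (openEvent e).indicator g = w ⬝ᵥ (a * g) := by
  have hupd : ∀ f : (E → Bool) → ℝ, DependsOn f {e}ᶜ → ∀ ω, f (Function.update ω e true) = f ω :=
    fun f hf ω => hf fun x hx => Function.update_of_ne hx _ _
  simp_rw [dotProduct, sum_eq_sum_filter_closed_add_update e]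
  refine Finset.sum_congr rfl fun ω hω => ?_
  rw [Finset.mem_filter_univ] at hω
  simp only [Set.indicator, openEvent, Set.mem_ofPred_eq, hω, Function.update_self, Pi.mul_apply,
    hupd a ha, hupd g hg, Bool.false_eq_true, if_false, if_true]
  linear_combination g ω * hw ω hω

end Configurations

section SequentialComparison

/-- Replace the state of `e` in the argument of `f` by an independent Bernoulli variable of
parameter `a`. -/
def resample (a : ℝ) (e : E) (f : (E → Bool) → ℝ) (ω : E → Bool) : ℝ :=
  a * f (Function.update ω e true) + (1 - a) * f (Function.update ω e false)

/-- The discrete derivative of `f` in the direction `e`. -/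
def discreteDeriv (e : E) (f : (E → Bool) → ℝ) (ω : E → Bool) : ℝ :=
  f (Function.update ω e true) - f (Function.update ω e false)

theorem eq_resample_add_discreteDeriv (a : ℝ) (e : E) (f : (E → Bool) → ℝ) :
    f = resample a e f + ((openEvent e).indicator (discreteDeriv e f) - a • discreteDeriv e f) := by
  funext ω
  have hω : f ω = f (Function.update ω e (ω e)) := by rw [Function.update_eq_self]
  cases h : ω e <;> rw [h] at hω <;>
  · simp only [Pi.add_apply, Pi.sub_apply, Pi.smul_apply, smul_eq_mul, Set.indicator, openEvent,
      Set.mem_ofPred_eq, h, hω, resample, discreteDeriv, Bool.false_eq_true, if_false, if_true]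
    ring

theorem dependsOn_comp_update {β : Type*} {U : Set E} {e : E} {f : (E → Bool) → β}
    (hf : DependsOn f (insert e U)) (b : Bool) :
    DependsOn (fun ω => f (Function.update ω e b)) U := by
  intro ω ω' h
  refine hf fun x hx => ?_
  rcases eq_or_ne x e with rfl | hxe
  · simp
  · simpa [hxe] using h x (hx.resolve_left hxe)

theorem monotone_resample {a : ℝ} (ha : a ∈ Set.Icc (0 : ℝ) 1) (e : E) {f : (E → Bool) → ℝ}
    (hf : Monotone f) : Monotone (resample a e f) := by
  intro ω ω' h
  have hupd : ∀ b, f (Function.update ω e b) ≤ f (Function.update ω' e b) := fun b =>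
    hf (update_le_update_iff.2 ⟨le_rfl, fun x _ => h x⟩)
  exact add_le_add (mul_le_mul_of_nonneg_left (hupd true) ha.1)
    (mul_le_mul_of_nonneg_left (hupd false) (sub_nonneg.2 ha.2))

theorem discreteDeriv_nonneg (e : E) {f : (E → Bool) → ℝ} (hf : Monotone f) :
    0 ≤ discreteDeriv e f := fun _ =>
  sub_nonneg.2 (hf (update_le_update_iff.2 ⟨Bool.false_le _, fun _ _ => le_rfl⟩))

variable [Fintype E]

/-- The signed weight `d` is nonnegative on the increasing functions of the edges in `U`. -/
def NonnegOnMonotone (d : (E → Bool) → ℝ) (U : Set E) : Prop :=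
  ∀ f, Monotone f → DependsOn f U → 0 ≤ d ⬝ᵥ f

/-- The conditional probability under `d` that `e` is open given the edges in `U` is at least `a`.
Testing against nonnegative functions instead of dividing makes sense of this for signed `d`. -/
def CondOpenGE (d : (E → Bool) → ℝ) (U : Set E) (e : E) (a : ℝ) : Prop :=
  ∀ g, 0 ≤ g → DependsOn g U → a * (d ⬝ᵥ g) ≤ d ⬝ᵥ (openEvent e).indicator g

theorem nonnegOnMonotone_empty {d : (E → Bool) → ℝ} (hd : ∑ ω, d ω = 0) :
    NonnegOnMonotone d ∅ := by
  intro f _ hf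
  have hconst : f = f (fun _ => false) • 1 := by
    funext ω
    simpa using hf.empty ω _
  rw [hconst, dotProduct_smul, dotProduct_one, hd, smul_zero]

theorem NonnegOnMonotone.insert {d : (E → Bool) → ℝ} {U : Set E} {e : E} {a : ℝ}
    (hU : NonnegOnMonotone d U) (ha : a ∈ Set.Icc (0 : ℝ) 1) (he : CondOpenGE d U e a) :
    NonnegOnMonotone d (insert e U) := by
  intro f hf hdep
  have htrue := dependsOn_comp_update hdep true
  have hfalse := dependsOn_comp_update hdep false
  have hres : 0 ≤ d ⬝ᵥ resample a e f := hU _ (monotone_resample ha e hf) fun ω ω' h => by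
    simp only [resample, htrue h, hfalse h]
  have hderiv := he (discreteDeriv e f) (discreteDeriv_nonneg e hf) fun ω ω' h => by
    simp only [discreteDeriv, htrue h, hfalse h]
  rw [eq_resample_add_discreteDeriv a e f, dotProduct_add, dotProduct_sub, dotProduct_smul,
    smul_eq_mul]
  linarith

theorem dotProduct_nonneg_of_monotone_of_condOpenGE {ι : Type*} [LinearOrder ι]
    {d : (E → Bool) → ℝ} {r : E → ℝ} (hd : ∑ ω, d ω = 0) (hr : ∀ e, r e ∈ Set.Icc (0 : ℝ) 1)
    (rank : E → ι)
    (h : ∀ e U, e ∉ U → (∀ u ∈ U, rank u ≤ rank e) → CondOpenGE d U e (r e))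
    {f : (E → Bool) → ℝ} (hf : Monotone f) : 0 ≤ d ⬝ᵥ f := by
  suffices hfin : ∀ T : Finset E, NonnegOnMonotone d T from
    hfin Finset.univ f hf (Finset.coe_univ (α := E) ▸ dependsOn_univ f)
  intro T
  induction T using Finset.induction_on_max_value rank with
  | empty => simpa using nonnegOnMonotone_empty hd
  | insert e T he hmax ih =>
    rw [Finset.coe_insert]
    exact ih.insert (hr e) (h e T he hmax)

end SequentialComparison

section ProductMeasure

theorem massOf_eq_dotProduct {ι : Type*} [Fintype ι] (w : ι → ℝ) (A : Set ι) :
    massOf w A = w ⬝ᵥ A.indicator 1 := by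
  simp [massOf, dotProduct, Set.indicator_apply, Finset.sum_filter]

theorem massOf_univ {ι : Type*} [Fintype ι] (w : ι → ℝ) : massOf w Set.univ = ∑ x, w x := by
  simp [massOf]

theorem Increasing.monotone_indicator_one {A : Set (E → Bool)} (hA : Increasing A) :
    Monotone (A.indicator (1 : (E → Bool) → ℝ)) := by
  intro ω ω' h
  by_cases hω : ω ∈ A
  · rw [Set.indicator_of_mem hω, Set.indicator_of_mem (hA hω h), Pi.one_apply, Pi.one_apply]
  · rw [Set.indicator_of_notMem hω]
    exact Set.indicator_nonneg (fun _ _ => zero_le_one) ω'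

variable [Fintype E]

theorem sum_berWeight (r : E → ℝ) : ∑ ω, berWeight r ω = 1 := by
  simp only [berWeight]
  rw [← Fintype.prod_sum fun e (b : Bool) => if b = true then r e else 1 - r e]
  simp

theorem berWeight_update_true (r : E → ℝ) {e : E} {ω : E → Bool} (hω : ω e = false) :
    (1 - r e) * berWeight r (Function.update ω e true) = r e * berWeight r ω := by
  have hoff : ∏ x ∈ Finset.univ \ {e},
      (if Function.update ω e true x = true then r x else 1 - r x) =
      ∏ x ∈ Finset.univ \ {e}, if ω x = true then r x else 1 - r x :=
    Finset.prod_congr rfl fun x hx => by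
      rw [Function.update_of_ne (by simpa using hx)]
  simp only [berWeight, Finset.prod_eq_mul_prod_sdiff_singleton_of_mem (Finset.mem_univ e), hoff,
    Function.update_self, hω, Bool.false_eq_true, if_false, if_true]
  ring

theorem berWeight_dotProduct_indicator_openEvent (r : E → ℝ) {e : E} {g : (E → Bool) → ℝ}
    (hg : DependsOn g {e}ᶜ) :
    berWeight r ⬝ᵥ (openEvent e).indicator g = r e * (berWeight r ⬝ᵥ g) := by
  rw [dotProduct_indicator_openEvent (a := fun _ => r e) (fun _ _ _ => rfl) hg fun ω hω => by
    linear_combination berWeight_update_true r hω]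
  exact dotProduct_smul (r e) _ g

/-- A positive `t` yields `P_r ≼ μ`, a negative one `μ ≼ P_r`, for `μ` the normalization of `w`. -/
theorem mul_probOf_sub_berProb_nonneg {ι : Type*} [LinearOrder ι] {w : (E → Bool) → ℝ}
    {r : E → ℝ} (hw : 0 < ∑ ω, w ω) (hr : ∀ e, r e ∈ Set.Icc (0 : ℝ) 1) (t : ℝ) (rank : E → ι)
    (h : ∀ e U, e ∉ U → (∀ u ∈ U, rank u ≤ rank e) → ∀ g, 0 ≤ g → DependsOn g U →
      0 ≤ t * (w ⬝ᵥ (openEvent e).indicator g - r e * (w ⬝ᵥ g)))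
    {A : Set (E → Bool)} (hA : Increasing A) :
    0 ≤ t * (probOf w A - berProb r A) := by
  set Z := ∑ ω, w ω with hZ
  set d := t • (w - Z • berWeight r) with hd
  have hdot (f : (E → Bool) → ℝ) : d ⬝ᵥ f = t * (w ⬝ᵥ f - Z * (berWeight r ⬝ᵥ f)) := by
    simp only [hd, smul_dotProduct, sub_dotProduct, smul_eq_mul]
  have hd_sum : ∑ ω, d ω = 0 := by
    rw [← dotProduct_one, hdot, dotProduct_one, dotProduct_one, sum_berWeight, ← hZ]
    ring
  have hd_mono := dotProduct_nonneg_of_monotone_of_condOpenGE hd_sum hr rank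
    (fun e U he hU g hg hgU => by
      have hge : DependsOn g {e}ᶜ := hgU.mono (Set.subset_compl_singleton_iff.2 he)
      rw [hdot, hdot, berWeight_dotProduct_indicator_openEvent r hge]
      linear_combination h e U he hU g hg hgU)
    hA.monotone_indicator_one
  rw [hdot, ← massOf_eq_dotProduct, ← massOf_eq_dotProduct] at hd_mono
  have hprob : t * (probOf w A - berProb r A)
      = t * (massOf w A - Z * massOf (berWeight r) A) / Z := by
    rw [berProb, probOf, probOf, massOf_univ, massOf_univ, sum_berWeight, ← hZ]
    field_simp
  rw [hprob]
  exact div_nonneg hd_mono hw.le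

end ProductMeasure

section Connectivity

variable {ends : E → Sym2 V} {α : Setoid V}

/-- The connected component of the wired vertex `x` in the multigraph with edge set `F`. -/
def component (ends : E → Sym2 V) (α : Setoid V) (F : Set E) (x : V) :
    Quotient (connSetoid ends α F) :=
  Quotient.mk _ (Quotient.mk α x)

theorem connSetoid_mono : Monotone (connSetoid ends α) := fun _ _ h =>
  Setoid.eqvGen_mono fun _ _ ⟨e, he, hends⟩ => ⟨e, h he, hends⟩

theorem endsConn_iff_component_eq (F : Set E) {e : E} {x y : V} (he : ends e = s(x, y)) :
    EndsConn ends α F e ↔ component ends α F x = component ends α F y := by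
  refine ⟨fun h => Quotient.sound (h x y he), fun h x' y' he' => ?_⟩
  rcases Sym2.eq_iff.1 (he.symm.trans he') with ⟨rfl, rfl⟩ | ⟨rfl, rfl⟩
  · exact Quotient.exact h
  · exact Quotient.exact h.symm

/-- Adding an edge redirects the component of one endpoint to that of the other. -/
theorem connSetoid_insert (F : Set E) {e : E} {x y : V} (he : ends e = s(x, y)) :
    connSetoid ends α (insert e F) = Setoid.ker
      (Function.update id (component ends α F y) (component ends α F x) ∘
        Quotient.mk (connSetoid ends α F)) := by
  set merge := Function.update id (component ends α F y) (component ends α F x) with hmerge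
  apply le_antisymm
  · refine Setoid.eqvGen_le fun a b ⟨e', he', hends⟩ => ?_
    rcases he' with rfl | he'
    · have hxy : merge (component ends α F x) = merge (component ends α F y) := by
        simp [hmerge, Function.update_apply]
      rw [he, Sym2.map_mk, Sym2.eq_iff] at hends
      rcases hends with ⟨rfl, rfl⟩ | ⟨rfl, rfl⟩
      · exact hxy
      · exact hxy.symm
    · exact congrArg merge (Quotient.sound (Relation.EqvGen.rel _ _ ⟨e', he', hends⟩))
  · have hmono : connSetoid ends α F ≤ connSetoid ends α (insert e F) :=
      connSetoid_mono (Set.subset_insert e F)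
    have hyx : Conn ends α (insert e F) (Quotient.mk α y) (Quotient.mk α x) :=
      Relation.EqvGen.rel _ _ ⟨e, Set.mem_insert e F, by rw [he, Sym2.map_mk, Sym2.eq_swap]⟩
    have hrep (a : Quotient α) : ∃ a', Quotient.mk (connSetoid ends α F) a' =
        merge (Quotient.mk _ a) ∧ Conn ends α (insert e F) a a' := by
      by_cases ha : Quotient.mk (connSetoid ends α F) a = component ends α F y
      · refine ⟨Quotient.mk α x, by rw [hmerge, ha, Function.update_self]; rfl, ?_⟩
        exact (connSetoid ends α _).trans (hmono (Quotient.exact ha)) hyx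
      · exact ⟨a, by rw [hmerge, Function.update_of_ne ha]; rfl, (connSetoid ends α _).refl a⟩
    intro a b hab
    obtain ⟨a', ha', haa'⟩ := hrep a
    obtain ⟨b', hb', hbb'⟩ := hrep b
    have ha'b' : Conn ends α F a' b' := Quotient.exact (ha'.trans (hab.trans hb'.symm))
    exact (connSetoid ends α _).trans haa' ((connSetoid ends α _).trans
      (hmono ha'b') ((connSetoid ends α _).symm hbb'))

theorem card_range_update_id {X : Type*} [Finite X] [DecidableEq X] (x y : X) :
    Nat.card X = Nat.card (Set.range (Function.update id y x)) + if x = y then 0 else 1 := by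
  split_ifs with hxy
  · rw [hxy, show Function.update id y y = id from Function.update_eq_self y id, Set.range_id,
      Nat.card_univ, add_zero]
  · have hrange : Set.range (Function.update id y x) = {y}ᶜ := by
      ext z
      refine ⟨?_, fun hz => ⟨z, Function.update_of_ne hz _ _⟩⟩
      rintro ⟨w, rfl⟩
      by_cases hw : w = y <;> simp [hw, hxy]
    rw [hrange, Nat.card_coe_set_eq, ← Set.ncard_singleton y, add_comm,
      Set.ncard_add_ncard_compl]

theorem card_quotient_connSetoid_insert [Finite V] (F : Set E) (e : E) :
    Nat.card (Quotient (connSetoid ends α F)) =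
      Nat.card (Quotient (connSetoid ends α (insert e F))) +
        if EndsConn ends α F e then 0 else 1 := by
  obtain ⟨x, y, he⟩ : ∃ x y, ends e = s(x, y) := by
    induction h : ends e with | _ x y => exact ⟨x, y, rfl⟩
  have hcard : Nat.card (Quotient (connSetoid ends α (insert e F))) = Nat.card (Set.range
      (Function.update id (component ends α F y) (component ends α F x))) := by
    rw [connSetoid_insert F he, Nat.card_congr (Setoid.quotientKerEquivRange _),
      Set.range_comp, Set.range_quotient_mk, Set.image_univ]
  rw [hcard, endsConn_iff_component_eq F he]
  convert card_range_update_id (component ends α F x) (component ends α F y)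

end Connectivity

section FKMeasure

variable {ends : E → Sym2 V} {α : Setoid V} {p q : ℝ}

/-- The event that the open edges other than `e` do not join the endpoints of `e`. -/
def disconnectedOff (ends : E → Sym2 V) (α : Setoid V) (e : E) : Set (E → Bool) :=
  {ω | ¬ EndsConn ends α {e' | ω e' = true ∧ e' ≠ e} e}

/-- The conditional probability under `φ^α_{G,p,q}` that `e` is open given the other edges. -/
def fkCondOpen (ends : E → Sym2 V) (α : Setoid V) (p q : ℝ) (e : E) (ω : E → Bool) : ℝ :=
  if ω ∈ disconnectedOff ends α e then pPrime p q else p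

theorem pPrime_mem_Ioo (hp : p ∈ Set.Ioo (0 : ℝ) 1) (hq : 0 < q) :
    pPrime p q ∈ Set.Ioo (0 : ℝ) 1 := by
  have hclosed := mul_pos hq (sub_pos.2 hp.2)
  have hden := add_pos hp.1 hclosed
  exact ⟨div_pos hp.1 hden, (div_lt_one hden).2 (lt_add_of_pos_right p hclosed)⟩

theorem one_sub_max_pPrime_mem_Ioo (hp : p ∈ Set.Ioo (0 : ℝ) 1) (hq : 0 < q) :
    1 - max p (pPrime p q) ∈ Set.Ioo (0 : ℝ) 1 :=
  ⟨sub_pos.2 (max_lt hp.2 (pPrime_mem_Ioo hp hq).2), sub_lt_self 1 (lt_max_of_lt_left hp.1)⟩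

theorem disconnectedOff_congr {e : E} {ω ω' : E → Bool} (h : ∀ x ∈ ({e}ᶜ : Set E), ω x = ω' x) :
    ω ∈ disconnectedOff ends α e ↔ ω' ∈ disconnectedOff ends α e := by
  have hset : {x | ω x = true ∧ x ≠ e} = {x | ω' x = true ∧ x ≠ e} :=
    Set.ext fun x => and_congr_left fun hx => by rw [h x hx]
  simp only [disconnectedOff, Set.mem_ofPred_eq, hset]

theorem dependsOn_fkCondOpen (e : E) : DependsOn (fkCondOpen ends α p q e) {e}ᶜ := fun ω ω' h => by
  simp only [fkCondOpen, disconnectedOff_congr h]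

theorem fkCondOpen_le_max (e : E) (ω : E → Bool) :
    fkCondOpen ends α p q e ω ≤ max p (pPrime p q) := by
  unfold fkCondOpen
  split_ifs
  exacts [le_max_right _ _, le_max_left _ _]

theorem numComponents_eq_update_true_add [Finite V] {e : E} {ω : E → Bool} (hω : ω e = false) :
    numComponents ends α ω = numComponents ends α (Function.update ω e true) +
      if ω ∈ disconnectedOff ends α e then 1 else 0 := by
  have hinsert : {x | Function.update ω e true x = true} = insert e {x | ω x = true} := by
    ext x
    by_cases hx : x = e <;> simp [hx]
  have hoff : {x | ω x = true ∧ x ≠ e} = {x | ω x = true} := by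
    ext x
    by_cases hx : x = e <;> simp [hx, hω]
  simp only [numComponents, disconnectedOff, Set.mem_ofPred_eq, hinsert, hoff, ite_not]
  exact card_quotient_connSetoid_insert _ e

theorem closedOn_subset_disconnectedOff {F χ : Set E} {e : E} (hχ : χ ∈ Cutsets ends α F e) :
    closedOn χ ⊆ disconnectedOff ends α e := by
  intro ω hω hconn
  have hsub : {x | ω x = true ∧ x ≠ e} ⊆ {x | x ∉ χ ∧ x ≠ e} := fun _ hx =>
    ⟨fun hxχ => Bool.false_ne_true ((hω _ hxχ).symm.trans hx.1), hx.2⟩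
  exact hχ.2 fun x y he => connSetoid_mono hsub (hconn x y he)

theorem dependsOn_indicator_closedOn {χ U : Set E} {g : (E → Bool) → ℝ} (hg : DependsOn g U) :
    DependsOn ((closedOn χ).indicator g) (χ ∪ U) := fun ω ω' h => by
  have hmem : ω ∈ closedOn χ ↔ ω' ∈ closedOn χ :=
    forall₂_congr fun x hx => by rw [h x (Or.inl hx)]
  simp only [Set.indicator, hmem, hg fun x hx => h x (Or.inr hx)]

variable [Fintype E]

theorem fkWeight_eq_berWeight_mul (ω : E → Bool) :
    fkWeight ends α p q ω = berWeight (fun _ => p) ω * q ^ numComponents ends α ω := by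
  simp [fkWeight, berWeight, Finset.prod_ite]

theorem fkWeight_pos (hp : p ∈ Set.Ioo (0 : ℝ) 1) (hq : 0 < q) (ω : E → Bool) :
    0 < fkWeight ends α p q ω :=
  mul_pos (mul_pos (pow_pos hp.1 _) (pow_pos (sub_pos.2 hp.2) _)) (pow_pos hq _)

theorem fkWeight_update_true [Finite V] (hp : p ∈ Set.Ioo (0 : ℝ) 1) (hq : 0 < q) {e : E}
    {ω : E → Bool} (hω : ω e = false) :
    fkWeight ends α p q (Function.update ω e true) = fkCondOpen ends α p q e ω *
      (fkWeight ends α p q ω + fkWeight ends α p q (Function.update ω e true)) := by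
  have hber := berWeight_update_true (fun _ => p) hω
  simp only [fkWeight_eq_berWeight_mul, numComponents_eq_update_true_add hω, fkCondOpen]
  set B := berWeight (fun _ => p) ω
  set B' := berWeight (fun _ => p) (Function.update ω e true)
  set Q := q ^ numComponents ends α (Function.update ω e true)
  split_ifs
  · have hden : p + q * (1 - p) ≠ 0 := (add_pos hp.1 (mul_pos hq (sub_pos.2 hp.2))).ne'
    rw [pPrime, pow_succ]
    field_simp
    linear_combination q * Q * hber
  · linear_combination Q * hber

theorem fkWeight_dotProduct_indicator_openEvent [Finite V] (hp : p ∈ Set.Ioo (0 : ℝ) 1)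
    (hq : 0 < q) {e : E} {g : (E → Bool) → ℝ} (hg : DependsOn g {e}ᶜ) :
    fkWeight ends α p q ⬝ᵥ (openEvent e).indicator g =
      fkWeight ends α p q ⬝ᵥ (fkCondOpen ends α p q e * g) :=
  dotProduct_indicator_openEvent (dependsOn_fkCondOpen e) hg fun _ => fkWeight_update_true hp hq

theorem fkWeight_dotProduct_fkCondOpen_mul (e : E) (g : (E → Bool) → ℝ) :
    fkWeight ends α p q ⬝ᵥ (fkCondOpen ends α p q e * g) = p * (fkWeight ends α p q ⬝ᵥ g) +
      (pPrime p q - p) * (fkWeight ends α p q ⬝ᵥ (disconnectedOff ends α e).indicator g) := by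
  have hsplit : fkCondOpen ends α p q e * g =
      p • g + (pPrime p q - p) • (disconnectedOff ends α e).indicator g := by
    funext ω
    simp only [fkCondOpen, Set.indicator, Pi.mul_apply, Pi.add_apply, Pi.smul_apply, smul_eq_mul]
    split_ifs <;> ring
  rw [hsplit, dotProduct_add, dotProduct_smul, dotProduct_smul, smul_eq_mul, smul_eq_mul]

theorem one_sub_max_mul_le_dotProduct_indicator_compl_openEvent [Finite V]
    (hp : p ∈ Set.Ioo (0 : ℝ) 1) (hq : 0 < q) {e : E} {g : (E → Bool) → ℝ} (hg0 : 0 ≤ g)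
    (hg : DependsOn g {e}ᶜ) :
    (1 - max p (pPrime p q)) * (fkWeight ends α p q ⬝ᵥ g) ≤
      fkWeight ends α p q ⬝ᵥ (openEvent e)ᶜ.indicator g := by
  have hopen : fkWeight ends α p q ⬝ᵥ (openEvent e).indicator g ≤
      max p (pPrime p q) * (fkWeight ends α p q ⬝ᵥ g) := by
    rw [fkWeight_dotProduct_indicator_openEvent hp hq hg,
      ← smul_eq_mul (max p (pPrime p q)), ← dotProduct_smul]
    exact dotProduct_le_dotProduct_of_nonneg_left
      (fun ω => mul_le_mul_of_nonneg_right (fkCondOpen_le_max e ω) (hg0 ω))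
      fun ω => (fkWeight_pos hp hq ω).le
  rw [Set.indicator_compl, dotProduct_sub]
  linarith

theorem one_sub_max_pow_mul_le_dotProduct_indicator_closedOn [Finite V]
    (hp : p ∈ Set.Ioo (0 : ℝ) 1) (hq : 0 < q) {U : Set E} {g : (E → Bool) → ℝ} (hg0 : 0 ≤ g)
    (hg : DependsOn g U) (χ : Finset E) (hχ : (χ : Set E) ⊆ Uᶜ) :
    (1 - max p (pPrime p q)) ^ χ.card * (fkWeight ends α p q ⬝ᵥ g) ≤
      fkWeight ends α p q ⬝ᵥ (closedOn χ).indicator g := by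
  induction χ using Finset.induction_on with
  | empty => simp [closedOn]
  | insert c χ hc ih =>
    rw [Finset.coe_insert, Set.insert_subset_iff] at hχ
    have hinsert : closedOn (insert c χ : Set E) = (openEvent c)ᶜ ∩ closedOn χ := by
      ext ω
      simp [closedOn, openEvent]
    have hc' : c ∉ (χ : Set E) ∪ U := by simpa [hc] using hχ.1
    rw [Finset.card_insert_of_notMem hc, pow_succ', mul_assoc, Finset.coe_insert, hinsert,
      ← Set.indicator_indicator]
    calc (1 - max p (pPrime p q)) *
          ((1 - max p (pPrime p q)) ^ χ.card * (fkWeight ends α p q ⬝ᵥ g))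
        ≤ (1 - max p (pPrime p q)) * (fkWeight ends α p q ⬝ᵥ (closedOn χ).indicator g) :=
          mul_le_mul_of_nonneg_left (ih hχ.2) (one_sub_max_pPrime_mem_Ioo hp hq).1.le
      _ ≤ fkWeight ends α p q ⬝ᵥ (openEvent c)ᶜ.indicator ((closedOn χ).indicator g) :=
          one_sub_max_mul_le_dotProduct_indicator_compl_openEvent hp hq
            (Set.indicator_nonneg fun ω _ => hg0 ω)
            ((dependsOn_indicator_closedOn hg).mono (Set.subset_compl_singleton_iff.2 hc'))

theorem one_sub_max_pow_mul_le_dotProduct_indicator_disconnectedOff [Finite V]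
    (hp : p ∈ Set.Ioo (0 : ℝ) 1) (hq : 0 < q) {U : Set E} {g : (E → Bool) → ℝ} (hg0 : 0 ≤ g)
    (hg : DependsOn g U) {e : E} {χ : Finset E} (hχ : (χ : Set E) ∈ Cutsets ends α Uᶜ e) {n : ℕ}
    (hn : χ.card ≤ n) :
    (1 - max p (pPrime p q)) ^ n * (fkWeight ends α p q ⬝ᵥ g) ≤
      fkWeight ends α p q ⬝ᵥ (disconnectedOff ends α e).indicator g := by
  have hw : 0 ≤ fkWeight ends α p q := fun ω => (fkWeight_pos hp hq ω).le
  obtain ⟨hm0, hm1⟩ := one_sub_max_pPrime_mem_Ioo hp hq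
  calc (1 - max p (pPrime p q)) ^ n * (fkWeight ends α p q ⬝ᵥ g)
      ≤ (1 - max p (pPrime p q)) ^ χ.card * (fkWeight ends α p q ⬝ᵥ g) :=
        mul_le_mul_of_nonneg_right (pow_le_pow_of_le_one hm0.le hm1.le hn)
          (dotProduct_nonneg_of_nonneg hw hg0)
    _ ≤ fkWeight ends α p q ⬝ᵥ (closedOn χ).indicator g :=
        one_sub_max_pow_mul_le_dotProduct_indicator_closedOn hp hq hg0 hg χ hχ.1
    _ ≤ fkWeight ends α p q ⬝ᵥ (disconnectedOff ends α e).indicator g :=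
        dotProduct_le_dotProduct_of_nonneg_left
          (Set.indicator_le_indicator_of_subset (closedOn_subset_disconnectedOff hχ) hg0) hw

end FKMeasure

section Enhancement

variable {p q : ℝ}

/-- The fraction `c e` of the way from `p` to `p'` that the parameter of `e` is moved, for
`n = D - 1`. -/
def cutsetFraction (p q : ℝ) (n : ℕ) (Ehat : Set E) : E → ℝ :=
  Ehat.indicator fun _ => (1 - max p (pPrime p q)) ^ n

theorem cutsetFraction_mem_Icc (hp : p ∈ Set.Ioo (0 : ℝ) 1) (hq : 0 < q) (n : ℕ) (Ehat : Set E)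
    (e : E) : cutsetFraction p q n Ehat e ∈ Set.Icc (0 : ℝ) 1 := by
  obtain ⟨hm0, hm1⟩ := one_sub_max_pPrime_mem_Ioo hp hq
  by_cases he : e ∈ Ehat
  · simpa [cutsetFraction, he] using ⟨pow_nonneg hm0.le n, pow_le_one₀ hm0.le hm1.le⟩
  · simp [cutsetFraction, he]

variable [Finite V] [Fintype E] {ends : E → Sym2 V} {α : Setoid V}

theorem cutsetFraction_mul_le_dotProduct_indicator_disconnectedOff (hp : p ∈ Set.Ioo (0 : ℝ) 1)
    (hq : 0 < q) {n : ℕ} {Ehat : Set E}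
    (hcut : ∀ e ∈ Ehat, ∃ χ : Finset E,
      (χ : Set E) ∈ Cutsets ends α Ehatᶜ e ∧ χ.card ≤ n)
    {e : E} {U : Set E} (hU : e ∈ Ehat → U ⊆ Ehat) {g : (E → Bool) → ℝ} (hg0 : 0 ≤ g)
    (hg : DependsOn g U) :
    cutsetFraction p q n Ehat e * (fkWeight ends α p q ⬝ᵥ g) ≤
      fkWeight ends α p q ⬝ᵥ (disconnectedOff ends α e).indicator g := by
  by_cases he : e ∈ Ehat
  · obtain ⟨χ, ⟨hχE, hχ⟩, hcard⟩ := hcut e he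
    rw [cutsetFraction, Set.indicator_of_mem he]
    exact one_sub_max_pow_mul_le_dotProduct_indicator_disconnectedOff hp hq hg0 hg
      ⟨hχE.trans (Set.compl_subset_compl.2 (hU he)), hχ⟩ hcard
  · rw [cutsetFraction, Set.indicator_of_notMem he, zero_mul]
    exact dotProduct_nonneg_of_nonneg (fun ω => (fkWeight_pos hp hq ω).le)
      (Set.indicator_nonneg fun ω _ => hg0 ω)

theorem sub_mul_fkProb_sub_berProb_nonneg (hp : p ∈ Set.Ioo (0 : ℝ) 1) (hq : 0 < q) {n : ℕ}
    {Ehat : Set E}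
    (hcut : ∀ e ∈ Ehat, ∃ χ : Finset E,
      (χ : Set E) ∈ Cutsets ends α Ehatᶜ e ∧ χ.card ≤ n)
    {A : Set (E → Bool)} (hA : Increasing A) :
    0 ≤ (pPrime p q - p) * (fkProb ends α p q A -
      berProb (fun e => p + (pPrime p q - p) * cutsetFraction p q n Ehat e) A) := by
  have hr (e : E) : p + (pPrime p q - p) * cutsetFraction p q n Ehat e ∈ Set.Icc (0 : ℝ) 1 := by
    have hseg := (convex_Icc (0 : ℝ) 1).add_smul_sub_mem (Set.Ioo_subset_Icc_self hp)
      (Set.Ioo_subset_Icc_self (pPrime_mem_Ioo hp hq)) (cutsetFraction_mem_Icc hp hq n Ehat e)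
    rwa [smul_eq_mul, mul_comm] at hseg
  -- As propositions are ordered by implication, this rank places `Ehat` before its complement.
  refine mul_probOf_sub_berProb_nonneg
    (Finset.sum_pos (fun ω _ => fkWeight_pos hp hq ω) Finset.univ_nonempty) hr _ (· ∉ Ehat)
    (fun e U he hU g hg0 hg => ?_) hA
  have hκ := cutsetFraction_mul_le_dotProduct_indicator_disconnectedOff hp hq hcut
    (fun heE u hu => not_not.1 fun huE => hU u hu huE heE) hg0 hg
  rw [fkWeight_dotProduct_indicator_openEvent hp hq
    (hg.mono (Set.subset_compl_singleton_iff.2 he)), fkWeight_dotProduct_fkCondOpen_mul]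
  linear_combination (pPrime p q - p) ^ 2 * hκ

end Enhancement

/-- **Proposition 4.1, cutset side** (uniform quantitative enhancement via bounded cutsets). -/
theorem uniform_enhancement_cutsets
    {V E : Type*} [Fintype V] [Fintype E]
    (ends : E → Sym2 V) (α : Setoid V)
    (p q : ℝ) (hp : p ∈ Set.Ioo (0 : ℝ) 1) (hq : 0 < q)
    (D : ℕ) (hD : 1 ≤ D)
    (Ehat : Set E)
    (hcut : ∀ e ∈ Ehat, ∃ χ : Finset E,
      (χ : Set E) ∈ Cutsets ends α Ehatᶜ e ∧ χ.card ≤ D - 1)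
    (δ : ℝ)
    (hδ : δ = |pPrime p q - p| * (1 - max p (pPrime p q)) ^ (D - 1)) :
    (p < pPrime p q →
      StochDom (berProb fun e => p + (if e ∈ Ehat then δ else 0)) (fkProb ends α p q)) ∧
    (pPrime p q < p →
      StochDom (fkProb ends α p q) (berProb fun e => p - (if e ∈ Ehat then δ else 0))) := by
  subst hδ
  refine ⟨fun hlt A hA => ?_, fun hlt A hA => ?_⟩
  all_goals have hcmp := sub_mul_fkProb_sub_berProb_nonneg hp hq hcut hA
  · have hr : (fun e => p + (pPrime p q - p) * cutsetFraction p q (D - 1) Ehat e) = fun e =>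
        p + if e ∈ Ehat then |pPrime p q - p| * (1 - max p (pPrime p q)) ^ (D - 1) else 0 := by
      funext e
      rw [cutsetFraction, Set.indicator_apply, mul_ite, mul_zero, abs_of_pos (sub_pos.2 hlt)]
    rw [hr] at hcmp
    exact sub_nonneg.1 (nonneg_of_mul_nonneg_right hcmp (sub_pos.2 hlt))
  · have hr : (fun e => p + (pPrime p q - p) * cutsetFraction p q (D - 1) Ehat e) = fun e =>
        p - if e ∈ Ehat then |pPrime p q - p| * (1 - max p (pPrime p q)) ^ (D - 1) else 0 := by
      funext e
      rw [cutsetFraction, Set.indicator_apply, mul_ite, mul_zero, abs_of_neg (sub_neg.2 hlt)]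
      split_ifs <;> ring
    rw [hr] at hcmp
    exact sub_nonpos.1 (nonpos_of_mul_nonneg_right hcmp (sub_neg.2 hlt))

end FKPaper
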